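/- Let K be a nonempty bounded closed convex subset of a uniformly convex Banach space X and let F : K → K be a nonexpansive mapping. Fix ε ∈ (0, 1/2) and sequences η_n, δ_n ∈ (ε, 1−ε). Let w_0 ∈ K and define w_{n+1} = (1−η_n) w_n + η_n F((1−δ_n) w_n + δ_n F w_n). Then ‖w_{n+1} − w_n‖ → 0 as n → ∞. -/

import Mathlib

/-!
Every nonexpansive self-map `F` of a nonempty bounded closed convex `K` has a fixed point `p`
(`exists_fixedPoint_of_nonexpansive`, the Browder–Göhde–Kirk theorem). Put
`y n = (1 - δ n) • w n + δ n • F (w n)`. Then `‖F (y n) - p‖ ≤ ‖y n - p‖ ≤ ‖w n - p‖`, so that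
`w (n + 1) - p` is a convex combination of two vectors of norm at most `‖w n - p‖`, with weights
bounded away from `0`. By uniform convexity (`exists_norm_combo_le_sub`) the distance to `p` drops
by a fixed amount whenever `‖F (y n) - w n‖` is not small. As `‖w n - p‖` is decreasing and bounded
below, such drops occur only finitely often; hence `F (y n) - w n → 0`, and
`w (n + 1) - w n = η n • (F (y n) - w n)`.

The fixed point is the asymptotic center in `K` of a sequence `x` with `F (x n) - x n → 0`, which
the Banach contraction principle supplies. Uniform convexity makes that center exist and be unique,
and `F` maps an asymptotic center of `x` to an asymptotic center of `x`.
-/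

open Filter Topology

/-- Uniform convexity for convex combinations whose weights are at least `a`. The gain `γ` depends
on an upper bound `R` for the radius, not on the radius `ρ` itself. -/
theorem exists_norm_combo_le_sub (X : Type*) [NormedAddCommGroup X] [NormedSpace ℝ X]
    [UniformConvexSpace X] {a e R : ℝ} (ha : 0 < a) (he : 0 < e) (hR : 0 < R) :
    ∃ γ, 0 < γ ∧ ∀ (ρ t : ℝ) (u v : X), ρ ≤ R → a ≤ t → t ≤ 1 - a → ‖u‖ ≤ ρ → ‖v‖ ≤ ρ →
      e ≤ ‖u - v‖ → ‖(1 - t) • u + t • v‖ ≤ ρ - γ := by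
  obtain ⟨γ, hγ, H⟩ := exists_forall_closed_ball_dist_add_le_two_sub X (div_pos he hR)
  refine ⟨a * (γ * (e / 2)), by positivity, fun ρ t u v hρR hat hta hu hv huv => ?_⟩
  have hρ : e / 2 ≤ ρ := by linarith [norm_sub_le u v]
  have hρ0 : 0 < ρ := by linarith
  have hs : ∀ z : X, ‖ρ⁻¹ • z‖ = ‖z‖ / ρ := fun z => by
    rw [norm_smul_of_nonneg (inv_nonneg.2 hρ0.le), div_eq_inv_mul]
  have h1 : ‖ρ⁻¹ • u + ρ⁻¹ • v‖ ≤ 2 - γ := by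
    apply H
    · rw [hs]; exact (div_le_one hρ0).2 hu
    · rw [hs]; exact (div_le_one hρ0).2 hv
    · rw [← smul_sub, hs]
      exact div_le_div₀ (norm_nonneg _) huv hρ0 hρR
  rw [← smul_add, hs, div_le_iff₀ hρ0] at h1
  have h2 : ‖u + v‖ ≤ 2 * ρ - γ * (e / 2) := by nlinarith
  have hg : 0 < γ * (e / 2) := by positivity
  generalize γ * (e / 2) = g at h2 hg ⊢
  -- Split off the midpoint, with the smaller of the two weights.
  rcases le_total t (1 / 2) with ht | ht
  · have e1 : (1 - t) • u + t • v = (1 - 2 * t) • u + t • (u + v) := by module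
    rw [e1]
    refine (norm_add_le _ _).trans ?_
    rw [norm_smul_of_nonneg (by linarith), norm_smul_of_nonneg (by linarith)]
    nlinarith [mul_le_mul_of_nonneg_left hu (by linarith : 0 ≤ 1 - 2 * t),
      mul_le_mul_of_nonneg_left h2 (by linarith : 0 ≤ t)]
  · have e1 : (1 - t) • u + t • v = (2 * t - 1) • v + (1 - t) • (u + v) := by module
    rw [e1]
    refine (norm_add_le _ _).trans ?_
    rw [norm_smul_of_nonneg (by linarith), norm_smul_of_nonneg (by linarith)]
    nlinarith [mul_le_mul_of_nonneg_left hv (by linarith : 0 ≤ 2 * t - 1),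
      mul_le_mul_of_nonneg_left h2 (by linarith : 0 ≤ 1 - t)]

/-- Approximate fixed points: the fixed point of the contraction `x ↦ (1 - t) • F x + t • u`,
for a fixed `u ∈ K`, is moved by `F` by at most `t * C`, where `C` bounds the diameter of `K`. -/
theorem exists_norm_sub_le_of_nonexpansive {X : Type*} [NormedAddCommGroup X] [NormedSpace ℝ X]
    [CompleteSpace X] {K : Set X} (hKne : K.Nonempty) (hKcl : IsClosed K) (hKconv : Convex ℝ K)
    {F : X → X} (hFK : ∀ w ∈ K, F w ∈ K)
    (hFne : ∀ w ∈ K, ∀ z ∈ K, ‖F w - F z‖ ≤ ‖w - z‖) {C : ℝ}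
    (hC : ∀ x ∈ K, ∀ y ∈ K, ‖x - y‖ ≤ C) {t : ℝ} (ht0 : 0 < t) (ht1 : t ≤ 1) :
    ∃ x ∈ K, ‖x - F x‖ ≤ t * C := by
  obtain ⟨u, hu⟩ := hKne
  have hmaps : Set.MapsTo (fun x => (1 - t) • F x + t • u) K K := fun x hx =>
    hKconv (hFK x hx) hu (by linarith) ht0.le (by ring)
  have hcon : ContractingWith (1 - t).toNNReal (hmaps.restrict _ K K) := by
    refine ⟨by rw [Real.toNNReal_lt_one]; linarith, LipschitzWith.of_dist_le_mul ?_⟩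
    rintro ⟨x, hx⟩ ⟨y, hy⟩
    rw [Subtype.dist_eq, Subtype.dist_eq, Real.coe_toNNReal _ (by linarith), dist_eq_norm,
      dist_eq_norm]
    simp only [Set.MapsTo.val_restrict_apply]
    rw [add_sub_add_right_eq_sub, ← smul_sub, norm_smul_of_nonneg (by linarith)]
    exact mul_le_mul_of_nonneg_left (hFne x hx y hy) (by linarith)
  obtain ⟨x, hx, hfix, -⟩ := hcon.exists_fixedPoint' hKcl.isComplete hmaps hu (edist_ne_top _ _)
  refine ⟨x, hx, ?_⟩
  have hfix' : (1 - t) • F x + t • u = x := hfix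
  have e1 : x - F x = t • (u - F x) := by
    nth_rw 1 [← hfix']
    module
  rw [e1, norm_smul_of_nonneg ht0.le]
  exact mul_le_mul_of_nonneg_left (hC u hu _ (hFK x hx)) ht0.le

/-- The Browder–Göhde–Kirk fixed point theorem in uniformly convex spaces. -/
theorem exists_fixedPoint_of_nonexpansive {X : Type*} [NormedAddCommGroup X] [NormedSpace ℝ X]
    [UniformConvexSpace X] [CompleteSpace X] {K : Set X} (hKne : K.Nonempty)
    (hKb : Bornology.IsBounded K) (hKcl : IsClosed K) (hKconv : Convex ℝ K)
    {F : X → X} (hFK : ∀ w ∈ K, F w ∈ K)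
    (hFne : ∀ w ∈ K, ∀ z ∈ K, ‖F w - F z‖ ≤ ‖w - z‖) : ∃ p ∈ K, F p = p := by
  obtain ⟨C, hC⟩ := Metric.isBounded_iff.1 hKb
  replace hC : ∀ x ∈ K, ∀ y ∈ K, ‖x - y‖ ≤ C := fun x hx y hy => by
    rw [← dist_eq_norm]; exact hC hx hy
  choose x hxK hx using fun n : ℕ => exists_norm_sub_le_of_nonexpansive hKne hKcl hKconv hFK hFne
    hC (t := 1 / ((n : ℝ) + 1)) (by positivity)
    ((div_le_one (by positivity)).2 (by linarith [Nat.cast_nonneg (α := ℝ) n]))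
  have hx0 : Tendsto (fun n => ‖x n - F (x n)‖) atTop (𝓝 0) := by
    refine squeeze_zero (fun _ => norm_nonneg _) hx ?_
    simpa using tendsto_one_div_add_atTop_nhds_zero_nat.mul_const C
  -- `d` is the asymptotic radius of `x` in `K`: the infimum of `limsup ‖x n - q‖` over `q ∈ K`.
  set S : Set ℝ := {ρ | ∃ q ∈ K, ∀ᶠ n in atTop, ‖x n - q‖ ≤ ρ} with hS
  have hSbdd : BddBelow S := by
    refine ⟨0, ?_⟩
    rintro ρ ⟨q, -, hq⟩
    obtain ⟨n, hn⟩ := hq.exists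
    exact (norm_nonneg _).trans hn
  have hSne : S.Nonempty := by
    obtain ⟨u, hu⟩ := hKne
    exact ⟨C, u, hu, Eventually.of_forall fun n => hC _ (hxK n) u hu⟩
  set d := sInf S
  have hd0 : 0 ≤ d := by
    refine le_csInf hSne ?_
    rintro ρ ⟨q, -, hq⟩
    obtain ⟨n, hn⟩ := hq.exists
    exact (norm_nonneg _).trans hn
  -- Two almost-minimizers are close: otherwise their midpoint would beat the radius `d`.
  have key : ∀ e > 0, ∃ s > 0, ∀ p ∈ K, ∀ q ∈ K, (∀ᶠ n in atTop, ‖x n - p‖ ≤ d + s) →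
      (∀ᶠ n in atTop, ‖x n - q‖ ≤ d + s) → ‖p - q‖ < e := by
    intro e he
    obtain ⟨γ, hγ, H⟩ := exists_norm_combo_le_sub X (a := 1 / 2) (R := d + 1) (by norm_num) he
      (by linarith)
    refine ⟨min 1 (γ / 2), by positivity, fun p hp q hq hxp hxq => ?_⟩
    by_contra! hpq
    have hmem : d + min 1 (γ / 2) - γ ∈ S := by
      refine ⟨(1 / 2 : ℝ) • p + (1 / 2 : ℝ) • q,
        hKconv hp hq (by norm_num) (by norm_num) (by norm_num), ?_⟩
      filter_upwards [hxp, hxq] with n h1 h2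
      have := H (d + min 1 (γ / 2)) (1 / 2) (x n - p) (x n - q)
        (by linarith [min_le_left 1 (γ / 2)]) le_rfl (by norm_num) h1 h2
        (by rwa [sub_sub_sub_cancel_left, norm_sub_rev])
      convert this using 2
      module
    have := csInf_le hSbdd hmem
    linarith [min_le_right 1 (γ / 2)]
  have hex : ∀ k : ℕ, ∃ q ∈ K, ∀ᶠ n in atTop, ‖x n - q‖ ≤ d + 1 / ((k : ℝ) + 1) := fun k => by
    obtain ⟨ρ, ⟨q, hq, hρ⟩, hlt⟩ := exists_lt_of_csInf_lt hSne
      (show sInf S < d + 1 / ((k : ℝ) + 1) from lt_add_of_pos_right _ (by positivity))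
    exact ⟨q, hq, hρ.mono fun n hn => hn.trans hlt.le⟩
  choose p hpK hp using hex
  have hpc : CauchySeq p := by
    refine Metric.cauchySeq_iff.2 fun e he => ?_
    obtain ⟨s, hs, hkey⟩ := key e he
    obtain ⟨N, hN⟩ := exists_nat_one_div_lt hs
    have hsmall : ∀ m ≥ N, ∀ᶠ n in atTop, ‖x n - p m‖ ≤ d + s := fun m hm => by
      filter_upwards [hp m] with n hn
      have := Nat.one_div_le_one_div (α := ℝ) hm
      linarith
    refine ⟨N, fun m hm n hn => ?_⟩
    rw [dist_eq_norm]
    exact hkey _ (hpK m) _ (hpK n) (hsmall m hm) (hsmall n hn)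
  obtain ⟨q, hq⟩ := cauchySeq_tendsto_of_complete hpc
  have hqK : q ∈ K := hKcl.mem_of_tendsto hq (Eventually.of_forall hpK)
  have hqmin : ∀ s > 0, ∀ᶠ n in atTop, ‖x n - q‖ ≤ d + s := by
    intro s hs
    obtain ⟨k, hk1, hk2⟩ := ((tendsto_iff_norm_sub_tendsto_zero.1 hq).eventually_lt_const
      (half_pos hs) |>.and ((tendsto_one_div_add_atTop_nhds_zero_nat (𝕜 := ℝ)).eventually_lt_const
      (half_pos hs))).exists
    filter_upwards [hp k] with n hn
    linarith [norm_sub_le_norm_sub_add_norm_sub (x n) (p k) q]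
  refine ⟨q, hqK, ?_⟩
  by_contra hne
  obtain ⟨s, hs, hkey⟩ := key ‖F q - q‖ (norm_pos_iff.2 (sub_ne_zero.2 hne))
  refine lt_irrefl _ (hkey _ (hFK q hqK) _ hqK ?_ (hqmin s hs))
  filter_upwards [hqmin (s / 2) (half_pos hs), hx0.eventually_lt_const (half_pos hs)] with n h1 h2
  linarith [norm_sub_le_norm_sub_add_norm_sub (x n) (F (x n)) (F q), hFne _ (hxK n) q hqK]

/-- Ishikawa iteration for a nonexpansive self-map of a nonempty bounded closed convex
subset of a uniformly convex Banach space: `‖w (n+1) - w n‖ → 0`. -/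
theorem ishikawa_norm_sub_succ_tendsto_zero
    {X : Type*} [NormedAddCommGroup X] [NormedSpace ℝ X]
    [UniformConvexSpace X] [CompleteSpace X]
    (K : Set X) (hKne : K.Nonempty) (hKb : Bornology.IsBounded K)
    (hKcl : IsClosed K) (hKconv : Convex ℝ K)
    (F : X → X) (hFK : ∀ w ∈ K, F w ∈ K)
    (hFne : ∀ w ∈ K, ∀ z ∈ K, ‖F w - F z‖ ≤ ‖w - z‖)
    (ε : ℝ) (hε : ε ∈ Set.Ioo (0 : ℝ) (1 / 2))
    (η δ : ℕ → ℝ)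
    (hη : ∀ n, η n ∈ Set.Ioo ε (1 - ε)) (hδ : ∀ n, δ n ∈ Set.Ioo ε (1 - ε))
    (w : ℕ → X) (hw0 : w 0 ∈ K)
    (hw : ∀ n, w (n + 1) =
      (1 - η n) • w n + η n • F ((1 - δ n) • w n + δ n • F (w n))) :
    Tendsto (fun n => ‖w (n + 1) - w n‖) atTop (𝓝 0) := by
  obtain ⟨hε0, hε1⟩ := hε
  obtain ⟨p, hpK, hp⟩ := exists_fixedPoint_of_nonexpansive hKne hKb hKcl hKconv hFK hFne
  set y : ℕ → X := fun n => (1 - δ n) • w n + δ n • F (w n) with hy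
  have hyK : ∀ n, w n ∈ K → y n ∈ K := fun n hn =>
    hKconv hn (hFK _ hn) (by linarith [(hδ n).2]) (by linarith [(hδ n).1]) (by ring)
  have hwK : ∀ n, w n ∈ K := by
    intro n
    induction n with
    | zero => exact hw0
    | succ n ih =>
      rw [hw n]
      exact hKconv ih (hFK _ (hyK n ih)) (by linarith [(hη n).2]) (by linarith [(hη n).1])
        (by ring)
  have hF : ∀ z ∈ K, ‖F z - p‖ ≤ ‖z - p‖ := fun z hz => by
    simpa only [hp] using hFne z hz p hpK
  -- Balls around `p` are convex, so both averaging steps do not increase the distance to `p`.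
  have hcombo : ∀ (t r : ℝ) (u v : X), 0 ≤ t → t ≤ 1 → ‖u - p‖ ≤ r → ‖v - p‖ ≤ r →
      ‖(1 - t) • u + t • v - p‖ ≤ r := fun t r u v h0 h1 hu hv => by
    have := convex_closedBall p r (mem_closedBall_iff_norm.2 hu) (mem_closedBall_iff_norm.2 hv)
      (sub_nonneg.2 h1) h0 (by ring)
    exact mem_closedBall_iff_norm.1 this
  have hFy : ∀ n, ‖F (y n) - p‖ ≤ ‖w n - p‖ := fun n =>
    (hF _ (hyK n (hwK n))).trans <| hcombo _ _ _ _ (by linarith [(hδ n).1])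
      (by linarith [(hδ n).2]) le_rfl (hF _ (hwK n))
  have hanti : Antitone fun n => ‖w n - p‖ := antitone_nat_of_succ_le fun n => by
    rw [hw n]
    exact hcombo _ _ _ _ (by linarith [(hη n).1]) (by linarith [(hη n).2]) le_rfl (hFy n)
  have hlim := tendsto_atTop_ciInf hanti ⟨0, by rintro _ ⟨n, rfl⟩; exact norm_nonneg _⟩
  have hdiff : Tendsto (fun n => ‖w n - p‖ - ‖w (n + 1) - p‖) atTop (𝓝 0) := by
    simpa using hlim.sub (hlim.comp (tendsto_add_atTop_nat 1))
  have hstep : ∀ n, w (n + 1) - w n = η n • (F (y n) - w n) := fun n => by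
    rw [hw n]
    module
  refine Metric.tendsto_atTop'.2 fun e he => ?_
  obtain ⟨γ, hγ, H⟩ := exists_norm_combo_le_sub X (R := ‖w 0 - p‖ + 1) hε0 he (by positivity)
  obtain ⟨N, hN⟩ := eventually_atTop.1 (hdiff.eventually_lt_const hγ)
  refine ⟨N, fun n hn => ?_⟩
  rw [dist_zero_right, norm_norm]
  by_contra! hge
  have hη1 : η n ≤ 1 := by linarith [(hη n).2]
  have hη0 : 0 ≤ η n := by linarith [(hη n).1]
  have hbig : e ≤ ‖w n - p - (F (y n) - p)‖ := by
    rw [sub_sub_sub_cancel_right, norm_sub_rev]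
    rw [hstep, norm_smul_of_nonneg hη0] at hge
    nlinarith [norm_nonneg (F (y n) - w n)]
  have h1 := H ‖w n - p‖ (η n) (w n - p) (F (y n) - p)
    (by linarith [hanti (Nat.zero_le n)]) (hη n).1.le (hη n).2.le le_rfl (hFy n) hbig
  have e1 : (1 - η n) • (w n - p) + η n • (F (y n) - p) = w (n + 1) - p := by
    rw [hw n]
    module
  rw [e1] at h1
  linarith [hN n hn.le]
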